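/- arXiv:1310.1840 — 3 statements merged into one kernel-verified Lean document; each statement's English description precedes it below -/
import Mathlib

section
/- For every column index i (1 ≤ i ≤ n), the i-th partial derivative of F is Lipschitz continuous along the i-th coordinate direction with constant L_i = max_{1≤j≤m} A_{j,i}²; that is, for all λ ∈ ℝ^n and all t ∈ ℝ, |∇_i F(λ + t e_i) − ∇_i F(λ)| ≤ L_i · |t|, where e_i is the i-th standard basis vector of ℝ^n. -/
open Finset
open scoped BigOperators Classical

noncomputable section

/-- Exponential loss `f(x) = (1/m) Σ_j exp(x_j)` (the normaliser `m` is fixed,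
the index type may vary). -/
def fExp (m : ℕ) {ι : Type} [Fintype ι] (x : ι → ℝ) : ℝ :=
  (1 / (m : ℝ)) * ∑ j, Real.exp (x j)

/-- Gradient of the exponential loss. -/
def gradf (m : ℕ) {ι : Type} [Fintype ι] (x : ι → ℝ) : ι → ℝ :=
  fun j => fderiv ℝ (fExp m (ι := ι)) x (Pi.single j 1)

/-- `F(λ) = log f(Aλ)`. -/
def FObj {mr : Type} [Fintype mr] {n : ℕ} (m : ℕ) (A : Matrix mr (Fin n) ℝ)
    (lam : Fin n → ℝ) : ℝ :=
  Real.log (fExp m (A.mulVec lam))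

/-- Gradient of `F`: `(∇F(λ))_i` is the `i`-th partial derivative. -/
def gradF {mr : Type} [Fintype mr] {n : ℕ} (m : ℕ) (A : Matrix mr (Fin n) ℝ)
    (lam : Fin n → ℝ) : Fin n → ℝ :=
  fun i => fderiv ℝ (FObj m A) lam (Pi.single i 1)

/-- Coordinate-wise Lipschitz constants `L_i = max_j A_{j,i}²`. -/
def Lip {mr : Type} [Fintype mr] {n : ℕ} (A : Matrix mr (Fin n) ℝ) (i : Fin n) : ℝ :=
  ⨆ j, (A j i) ^ 2

/-- `h_{[S]}`: keep the coordinates of `h` in `S`, zero the others. -/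
def restr {n : ℕ} (h : Fin n → ℝ) (S : Finset (Fin n)) : Fin n → ℝ :=
  fun i => if i ∈ S then h i else 0

/-- Expectation over the `τ`-nice sampling (uniform over subsets of cardinality `τ`). -/
def niceExp (n τ : ℕ) (g : Finset (Fin n) → ℝ) : ℝ :=
  (∑ S ∈ Finset.powersetCard τ (Finset.univ : Finset (Fin n)), g S) /
    ((Finset.powersetCard τ (Finset.univ : Finset (Fin n))).card : ℝ)

/-- Expected Separable Overapproximation with constant `β` and weights `L`. -/
def ESO {mr : Type} [Fintype mr] {n : ℕ} (m : ℕ) (A : Matrix mr (Fin n) ℝ)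
    (τ : ℕ) (β : ℝ) : Prop :=
  ∀ x h : Fin n → ℝ,
    niceExp n τ (fun S => FObj m A (x + restr h S)) ≤
      FObj m A x + ((τ : ℝ) / (n : ℝ)) *
        ((∑ i, gradF m A x i * h i) + (β / 2) * ∑ i, Lip A i * h i ^ 2)

/-- ℓ¹ distance from `x` to a set `K`. -/
def D1 {ι : Type} [Fintype ι] (K : Set (ι → ℝ)) (x : ι → ℝ) : ℝ :=
  ⨅ z : K, ∑ j, |x j - (z : ι → ℝ) j|

/-- Kernel of `Aᵀ`. -/
def kerAT {mr : Type} [Fintype mr] {n : ℕ} (A : Matrix mr (Fin n) ℝ) : Set (mr → ℝ) :=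
  {φ | A.transpose.mulVec φ = 0}

/-- `‖g‖_{L⁻¹} = (Σ_i g_i²/L_i)^{1/2}`. -/
def normLinv {mr : Type} [Fintype mr] {n : ℕ} (A : Matrix mr (Fin n) ℝ)
    (g : Fin n → ℝ) : ℝ :=
  Real.sqrt (∑ i, g i ^ 2 / Lip A i)

/-- `γ̃(A,K)`. -/
def gammaT {mr : Type} [Fintype mr] {n : ℕ} (A : Matrix mr (Fin n) ℝ)
    (K : Set (mr → ℝ)) : ℝ :=
  ⨅ φ : {φ : mr → ℝ // φ ∈ K ∧ φ ∉ kerAT A},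
    normLinv A (A.transpose.mulVec (φ : mr → ℝ)) / D1 (K ∩ kerAT A) (φ : mr → ℝ)

/-- Hard core `H(A)`. -/
def hardCore {mr : Type} [Fintype mr] {n : ℕ} (A : Matrix mr (Fin n) ℝ) : Set mr :=
  {j | ∃ φ : mr → ℝ, φ ∈ kerAT A ∧ (∀ k, 0 ≤ φ k) ∧ 0 < φ j}

/-- Parallel Adaboost iterates, given the sequence of sampled coordinate sets. -/
def iter {mr : Type} [Fintype mr] {n : ℕ} (m : ℕ) (A : Matrix mr (Fin n) ℝ) (β : ℝ)
    (lam0 : Fin n → ℝ) (s : ℕ → Finset (Fin n)) : ℕ → Fin n → ℝ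
  | 0 => lam0
  | t + 1 =>
    let lt := iter m A β lam0 s t
    let lt' : Fin n → ℝ := fun i =>
      if i ∈ s t then lt i - (1 / (β * Lip A i)) * gradF m A lt i else lt i
    if FObj m A lt' ≤ FObj m A lt then lt' else lt

/-!
Restrict `F` to a line `λ + t h` and put `a = A h`. Then
`F(λ + t h) = log ∑ j, (exp (A λ)_j / m) exp (t a_j)` is the cumulant generating function of the
discrete measure carrying the weight `exp (A λ)_j / m` at the atom `a_j`. Its second derivative is
the variance of an exponentially tilted probability measure on the same atoms, which is at most the
tilted second moment, hence at most `max_j a_j²`. For `h = e_i` this maximum is `L_i`.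
-/

open MeasureTheory ProbabilityTheory
open scoped NNReal Matrix

section CumulantGeneratingFunction

variable {Ω : Type*} [MeasurableSpace Ω] {μ : Measure Ω} {X : Ω → ℝ} {K : ℝ≥0}

lemma variance_le_of_sq_le [IsZeroOrProbabilityMeasure μ] (hX : AEStronglyMeasurable X μ)
    (hK : ∀ᵐ ω ∂μ, X ω ^ 2 ≤ K) : variance X μ ≤ K := by
  obtain rfl | hμ := eq_zero_or_isProbabilityMeasure μ
  · simp
  calc variance X μ ≤ ∫ ω, X ω ^ 2 ∂μ := variance_le_expectation_sq hX
    _ ≤ ∫ _, (K : ℝ) ∂μ :=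
      integral_mono_of_nonneg (.of_forall fun ω => sq_nonneg (X ω)) (integrable_const _) hK
    _ = K := by simp

lemma integrableExpSet_eq_univ_of_sq_le [IsFiniteMeasure μ] (hX : AEMeasurable X μ)
    (hK : ∀ᵐ ω ∂μ, X ω ^ 2 ≤ K) : integrableExpSet X μ = Set.univ :=
  Set.eq_univ_of_forall fun _ => integrable_exp_mul_of_mem_Icc hX <|
    hK.mono fun _ h => abs_le.mp (Real.abs_le_sqrt h)

theorem lipschitzWith_deriv_cgf_of_sq_le [IsFiniteMeasure μ] (hX : AEMeasurable X μ)
    (hK : ∀ᵐ ω ∂μ, X ω ^ 2 ≤ K) : LipschitzWith K (deriv (cgf X μ)) := by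
  have mem_interior (t : ℝ) : t ∈ interior (integrableExpSet X μ) := by
    simp [integrableExpSet_eq_univ_of_sq_le hX hK]
  refine lipschitzWith_of_nnnorm_deriv_le
    (fun t => (analyticAt_cgf (mem_interior t)).deriv.differentiableAt) fun t => ?_
  have hac := tilted_absolutelyContinuous μ (t * X ·)
  have second_deriv_eq : deriv (deriv (cgf X μ)) t = variance X (μ.tilted (t * X ·)) := by
    rw [variance_tilted_mul (mem_interior t), iteratedDeriv_succ, iteratedDeriv_one]
  rw [← NNReal.coe_le_coe, coe_nnnorm, second_deriv_eq, Real.norm_of_nonneg (variance_nonneg _ _)]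
  exact variance_le_of_sq_le (hX.aestronglyMeasurable.mono_ac hac) (hac.ae_le hK)

end CumulantGeneratingFunction

section WeightedAtoms

variable {ι : Type*} [Fintype ι] {w a : ι → ℝ}

/-- The finite discrete measure `∑ j, w j δ_{a j}` on `ℝ`, with negative weights truncated to `0`.
The atoms `a j` need not be distinct. -/
def weightedAtoms (w a : ι → ℝ) : Measure ℝ :=
  ∑ j, ENNReal.ofReal (w j) • Measure.dirac (a j)

instance : IsFiniteMeasure (weightedAtoms w a) := by
  have (j : ι) : IsFiniteMeasure (ENNReal.ofReal (w j) • Measure.dirac (a j)) :=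
    Measure.smul_finite _ ENNReal.ofReal_ne_top
  unfold weightedAtoms
  infer_instance

lemma ae_weightedAtoms_of_forall {p : ℝ → Prop} (hp : ∀ j, p (a j)) :
    ∀ᵐ x ∂weightedAtoms w a, p x := by
  simp [ae_iff, weightedAtoms, hp]

lemma mgf_weightedAtoms (hw : ∀ j, 0 ≤ w j) (t : ℝ) :
    mgf id (weightedAtoms w a) t = ∑ j, w j * Real.exp (t * a j) := by
  rw [mgf, weightedAtoms, integral_finsetSum_measure
    fun _ _ => (integrable_dirac (by simp)).smul_measure ENNReal.ofReal_ne_top]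
  simp [ENNReal.toReal_ofReal, hw]

end WeightedAtoms

section LineRestriction

lemma deriv_comp_add_smul {𝕜 E F : Type*} [NontriviallyNormedField 𝕜]
    [NormedAddCommGroup E] [NormedSpace 𝕜 E] [NormedAddCommGroup F] [NormedSpace 𝕜 F]
    {f : E → F} {x v : E} {t : 𝕜} (hf : DifferentiableAt 𝕜 f (x + t • v)) :
    deriv (fun s : 𝕜 => f (x + s • v)) t = fderiv 𝕜 f (x + t • v) v := by
  have hline : HasDerivAt (fun s : 𝕜 => x + s • v) v t := by
    simpa only [id_eq, one_smul] using ((hasDerivAt_id t).smul_const v).const_add x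
  exact (hf.hasFDerivAt.comp_hasDerivAt t hline).deriv

variable {mr : Type} [Fintype mr] {m n : ℕ}

lemma fExp_pos [Nonempty mr] (hm : m ≠ 0) (x : mr → ℝ) : 0 < fExp m x := by
  unfold fExp
  positivity

lemma differentiable_FObj [Nonempty mr] (hm : m ≠ 0) (A : Matrix mr (Fin n) ℝ) :
    Differentiable ℝ (FObj m A) := by
  have differentiable_fExp_mulVec : Differentiable ℝ fun lam => fExp m (A *ᵥ lam) := by
    unfold fExp Matrix.mulVec dotProduct
    fun_prop
  exact differentiable_fExp_mulVec.log fun lam => (fExp_pos hm _).ne'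

lemma FObj_add_smul_eq_cgf (A : Matrix mr (Fin n) ℝ) (lam h : Fin n → ℝ) (t : ℝ) :
    FObj m A (lam + t • h) =
      cgf id (weightedAtoms (fun j => Real.exp ((A *ᵥ lam) j) / m) (A *ᵥ h)) t := by
  rw [FObj, cgf, mgf_weightedAtoms fun j => by positivity, fExp, Finset.mul_sum]
  congr! 2 with j
  simp only [Matrix.mulVec_add, Matrix.mulVec_smul, Pi.add_apply, Pi.smul_apply, smul_eq_mul,
    Real.exp_add]
  ring

theorem lipschitzWith_fderiv_FObj_line [Nonempty mr] (hm : m ≠ 0) (A : Matrix mr (Fin n) ℝ)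
    (lam h : Fin n → ℝ) {K : ℝ≥0} (hK : ∀ j, (A *ᵥ h) j ^ 2 ≤ K) :
    LipschitzWith K fun t : ℝ => fderiv ℝ (FObj m A) (lam + t • h) h := by
  simp_rw [← deriv_comp_add_smul (differentiable_FObj hm A _), FObj_add_smul_eq_cgf]
  exact lipschitzWith_deriv_cgf_of_sq_le aemeasurable_id (ae_weightedAtoms_of_forall hK)

end LineRestriction

theorem stmt0_general {mr : Type} [Fintype mr] [Nonempty mr] {m n : ℕ} (hm : m ≠ 0)
    (A : Matrix mr (Fin n) ℝ) (h lam : Fin n → ℝ) (t : ℝ) :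
    |fderiv ℝ (FObj m A) (lam + t • h) h - fderiv ℝ (FObj m A) lam h| ≤
      (⨆ j, (A *ᵥ h) j ^ 2) * |t| := by
  have sup_nonneg : 0 ≤ ⨆ j, (A *ᵥ h) j ^ 2 := Real.iSup_nonneg fun j => sq_nonneg _
  have le_sup (j : mr) : (A *ᵥ h) j ^ 2 ≤ ⨆ j, (A *ᵥ h) j ^ 2 :=
    le_ciSup (f := fun j => (A *ᵥ h) j ^ 2) (Set.finite_range _).bddAbove j
  lift (⨆ j, (A *ᵥ h) j ^ 2) to ℝ≥0 using sup_nonneg with K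
  simpa [Real.dist_eq] using (lipschitzWith_fderiv_FObj_line hm A lam h le_sup).dist_le_mul t 0

/-- each partial derivative of `F` is Lipschitz along its own
coordinate direction with constant `L_i = max_j A_{j,i}²`. -/
theorem stmt0 {m n : ℕ} (hm : 1 ≤ m) (hn : 1 ≤ n) (A : Matrix (Fin m) (Fin n) ℝ)
    (i : Fin n) :
    ∀ (lam : Fin n → ℝ) (t : ℝ),
      |gradF m A (lam + t • (Pi.single i 1 : Fin n → ℝ)) i - gradF m A lam i| ≤
        Lip A i * |t| := by
  have : Nonempty (Fin m) := ⟨⟨0, hm⟩⟩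
  simpa [gradF, Lip, Matrix.col] using stmt0_general (by lia) A (Pi.single i 1)

end
end

section
/- Let λ ∈ ℝ^n and define δ ∈ ℝ^n by δ_i = −(1/(β L_i))·∇_i F(λ) for every i. Then the expectation over the τ-nice sampling Ŝ of the value after the parallel coordinate update satisfies E[F(λ + δ_{[Ŝ]})] ≤ F(λ) − (τ/(2βn))·‖∇F(λ)‖_{L^{-1}}², where ‖g‖_{L^{-1}} = (Σ_{i=1}^n g_i²/L_i)^{1/2}. -/
open Finset
open scoped BigOperators Classical

noncomputable section

/-- Expected separable overapproximation of `F` at the point `x` for the `τ`-nice sampling, with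
parameter `β` and weights `v`. The vector `g` plays the role of `∇F(x)`; as in `HasGradientAt`, it
is an argument, so that no derivative with a default value enters. -/
def HasESOAt {n : ℕ} (F : (Fin n → ℝ) → ℝ) (g : Fin n → ℝ) (τ : ℕ) (β : ℝ) (v : Fin n → ℝ)
    (x : Fin n → ℝ) : Prop :=
  ∀ h : Fin n → ℝ,
    niceExp n τ (fun S => F (x + restr h S)) ≤
      F x + (τ : ℝ) / (n : ℝ) * ((∑ i, g i * h i) + β / 2 * ∑ i, v i * h i ^ 2)

theorem ESO.hasESOAt {mr : Type} [Fintype mr] {m n : ℕ} {A : Matrix mr (Fin n) ℝ} {τ : ℕ} {β : ℝ}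
    (hESO : ESO m A τ β) (x : Fin n → ℝ) :
    HasESOAt (FObj m A) (gradF m A x) τ β (Lip A) x :=
  hESO x

theorem lip_pos {mr : Type} [Fintype mr] {n : ℕ} {A : Matrix mr (Fin n) ℝ} {i : Fin n}
    (hi : ∃ j, A j i ≠ 0) : 0 < Lip A i := by
  obtain ⟨j, hj⟩ := hi
  calc
    0 < A j i ^ 2 := sq_pos_of_ne_zero hj
    _ ≤ Lip A i := le_ciSup (f := fun j => A j i ^ 2) (Set.finite_range _).bddAbove j

-- `δ` is the critical point of `h ↦ ∑ gᵢhᵢ + (β/2) ∑ vᵢhᵢ²`, found one coordinate at a time.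
theorem sum_mul_add_half_mul_sum_mul_sq_eq {ι K : Type*} [Field K] [NeZero (2 : K)]
    (s : Finset ι) {β : K} (hβ : β ≠ 0) {g v δ : ι → K} (hv : ∀ i ∈ s, v i ≠ 0)
    (hδ : ∀ i ∈ s, δ i = -(1 / (β * v i)) * g i) :
    (∑ i ∈ s, g i * δ i) + β / 2 * ∑ i ∈ s, v i * δ i ^ 2 =
      -(1 / (2 * β)) * ∑ i ∈ s, g i ^ 2 / v i := by
  rw [mul_sum, mul_sum, ← sum_add_distrib]
  refine sum_congr rfl fun i hi => ?_
  have hvi := hv i hi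
  rw [hδ i hi]
  field_simp
  ring

theorem stmt3_general {n τ : ℕ} {F : (Fin n → ℝ) → ℝ} {β : ℝ} {g v x δ : Fin n → ℝ}
    (hF : HasESOAt F g τ β v x) (hβ : β ≠ 0) (hv : ∀ i, v i ≠ 0)
    (hδ : ∀ i, δ i = -(1 / (β * v i)) * g i) :
    niceExp n τ (fun S => F (x + restr δ S)) ≤
      F x - (τ : ℝ) / (2 * β * (n : ℝ)) * ∑ i, g i ^ 2 / v i :=
  calc
    niceExp n τ (fun S => F (x + restr δ S))
    _ ≤ F x + (τ : ℝ) / (n : ℝ) * ((∑ i, g i * δ i) + β / 2 * ∑ i, v i * δ i ^ 2) := hF δ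
    _ = F x + (τ : ℝ) / (n : ℝ) * (-(1 / (2 * β)) * ∑ i, g i ^ 2 / v i) := by
      rw [sum_mul_add_half_mul_sum_mul_sq_eq _ hβ (fun i _ => hv i) fun i _ => hδ i]
    _ = F x - (τ : ℝ) / (2 * β * (n : ℝ)) * ∑ i, g i ^ 2 / v i := by ring

/-- the expected value after the parallel coordinate update with
steps `δ_i = −(1/(βL_i))∇_iF(λ)` decreases `F` by `(τ/(2βn))·‖∇F(λ)‖_{L⁻¹}²`. -/
theorem stmt3 {m n : ℕ} (hm : 1 ≤ m) (hn : 1 ≤ n) (A : Matrix (Fin m) (Fin n) ℝ)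
    (hA : ∀ i : Fin n, ∃ j : Fin m, A j i ≠ 0)
    (τ : ℕ) (hτ1 : 1 ≤ τ) (hτn : τ ≤ n)
    (β : ℝ) (hβ : 0 < β) (hESO : ESO m A τ β)
    (lam : Fin n → ℝ)
    (δ : Fin n → ℝ) (hδ : ∀ i, δ i = -(1 / (β * Lip A i)) * gradF m A lam i) :
    niceExp n τ (fun S => FObj m A (lam + restr δ S)) ≤
      FObj m A lam - (τ : ℝ) / (2 * β * (n : ℝ)) * ∑ i, gradF m A lam i ^ 2 / Lip A i :=
  stmt3_general (hESO.hasESOAt lam) hβ.ne' (fun i => (lip_pos (hA i)).ne') hδ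

end
end

section
/- Suppose 1 ≤ |H(A)| ≤ m−1, and order the rows so that A = [A₀; A₊] where A₊ collects the rows in H(A). Fix λ⁰ ∈ ℝ^n and let C₊ ⊆ ℝ^{m₊} be a compact axis-aligned rectangle containing { x ∈ Im(A₊) : f(x) ≤ f(Aλ⁰) }. Let K = ℝ₊^{m₀} × ∇f(C₊) and assume: (i) f̄_A > 0 and inf_{μ∈ℝ^n} f(A₊μ) = f̄_A; (ii) γ̃ := γ̃(A, K) > 0; (iii) c̃ > 0 and w̃ ≥ 0 are constants such that for every λ with f(Aλ) ≤ f(Aλ⁰), F(λ) − log f̄_A ≤ ((1 + 2w̃/c̃)/f(A₊λ)) · D¹_{K ∩ Ker(Aᵀ)}(∇f(Aλ)); and (iv) β > 0 satisfies the ESO. Let (λ^t)_{t≥0} be the Parallel Adaboost iterates started at λ⁰. Then for every 0 < ε < 2f̄_A, every ρ ∈ (0,1), and every integer T ≥ (4βn/τ) · ((1 + 2w̃/c̃)²/γ̃²) · (f(Aλ⁰)²/f̄_A) · (1/ε) · (1 + log(1/ρ)) + 2, one has P( f(Aλ^T) − f̄_A ≤ ε ) ≥ 1 − ρ. -/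
open Finset
open scoped BigOperators Classical

noncomputable section

/-!
Let `D` be the gap `F - log f̄`.  The expected separable overapproximation turns one step of the
method into an expected decrease of `F` by a multiple of `‖∇F‖²_{L⁻¹}`.  On the initial level set
the error bound, the definition of `γ̃` and the identity `Aᵀ∇f(Aλ) = f(Aλ) ∇F(λ)` bound `D` by a
multiple of `‖∇F‖_{L⁻¹}`, whence `𝔼 D(λ⁺) ≤ D(λ) - D(λ)² / c`.  Truncating `D` to zero below a
level `e` gives a sequence of expectations which is at most `e` after `c / e` steps, by the
sublinear rate of this recursion, and from then on decreases geometrically with ratio `1 - e / c`,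
as `D² ≥ e D` wherever the truncation is nonzero.  Markov's inequality at level `ρ e` concludes,
with `e = ε / (2 f̄)`.
-/

section RealInequalities

lemma sub_le_of_log_sub_log_le {x y ε : ℝ} (hx : 0 < x) (hy : 0 < y) (hε : 0 ≤ ε)
    (hεy : ε ≤ 2 * y) (h : Real.log x - Real.log y ≤ ε / (2 * y)) : x - y ≤ ε := by
  set r := ε / y with hr
  have hr0 : 0 ≤ r := by positivity
  have hr2 : r ≤ 2 := (div_le_iff₀ hy).2 hεy
  have hlog : Real.log (x / y) ≤ Real.log (1 + r) :=
    calc Real.log (x / y) = Real.log x - Real.log y := Real.log_div hx.ne' hy.ne'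
      _ ≤ r / 2 := h.trans_eq (by rw [hr]; field_simp)
      _ ≤ 2 * r / (r + 2) := by
        rw [div_le_div_iff₀ two_pos (by positivity)]
        nlinarith
      _ ≤ Real.log (1 + r) := Real.le_log_one_add_of_nonneg hr0
  have hxy : x / y ≤ 1 + r := (Real.log_le_log_iff (by positivity) (by positivity)).1 hlog
  rw [div_le_iff₀ hy, hr] at hxy
  have : (1 + ε / y) * y = y + ε := by field_simp
  linarith

variable {u : ℕ → ℝ} {c e ρ : ℝ}

lemma mul_add_one_le_of_succ_le_sub_sq_div (hc : 0 < c) (hu : ∀ t, 0 ≤ u t)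
    (h : ∀ t, u (t + 1) ≤ u t - u t ^ 2 / c) (t : ℕ) : u t * (t + 1) ≤ c := by
  have hle (t : ℕ) : u t ≤ c := by
    have hsq : u t ^ 2 ≤ u t * c := (div_le_iff₀ hc).1 (by linarith [h t, hu (t + 1)])
    by_contra! hlt
    nlinarith
  induction t with
  | zero => simpa using hle 0
  | succ t ih =>
    have hgap : 0 ≤ (c - u t * (t + 1)) * (c - u t) + u t ^ 2 :=
      add_nonneg (mul_nonneg (sub_nonneg.2 ih) (sub_nonneg.2 (hle t))) (sq_nonneg _)
    calc u (t + 1) * ((t + 1 : ℕ) + 1) ≤ (u t - u t ^ 2 / c) * ((t + 1 : ℕ) + 1) := by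
          gcongr
          exact h t
      _ = c - ((c - u t * (t + 1)) * (c - u t) + u t ^ 2) / c := by
          push_cast
          field_simp
          ring
      _ ≤ c := sub_le_self _ (by positivity)

lemma le_exp_mul_of_succ_le_one_sub_mul {r : ℝ} (hu : ∀ t, 0 ≤ u t)
    (h : ∀ t, u (t + 1) ≤ (1 - r) * u t) (k : ℕ) : u k ≤ Real.exp (-(k * r)) * u 0 := by
  have hstep (t : ℕ) : u (t + 1) ≤ Real.exp (-r) * u t :=
    (h t).trans (mul_le_mul_of_nonneg_right (Real.one_sub_le_exp_neg r) (hu t))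
  calc u k ≤ Real.exp (-r) ^ k * u 0 := le_geom (Real.exp_pos _).le k fun t _ => hstep t
    _ = Real.exp (-(k * r)) * u 0 := by rw [← Real.exp_nat_mul, mul_neg]

lemma le_mul_of_succ_le_sub_sq_div_of_succ_le_one_sub_mul (hc : 0 < c) (he : 0 < e)
    (hu : ∀ t, 0 ≤ u t) (hsq : ∀ t, u (t + 1) ≤ u t - u t ^ 2 / c)
    (hlin : ∀ t, u (t + 1) ≤ (1 - e / c) * u t) (hρ : 0 < ρ) (hρ1 : ρ ≤ 1) {T : ℕ}
    (hT : c / e * (1 + Real.log (1 / ρ)) + 1 ≤ T) : u T ≤ ρ * e := by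
  have hlog : 0 ≤ Real.log (1 / ρ) := Real.log_nonneg ((one_le_div₀ hρ).2 hρ1)
  have hce : 0 < c / e := div_pos hc he
  set t₁ := ⌈c / e⌉₊
  have ht₁_lt : (t₁ : ℝ) < c / e + 1 := Nat.ceil_lt_add_one hce.le
  obtain ⟨t₂, rfl⟩ : ∃ t₂, T = t₁ + t₂ := by
    refine Nat.exists_eq_add_of_le (Nat.cast_le (α := ℝ) |>.1 ?_)
    nlinarith
  have hsublinear : u t₁ ≤ e := by
    have hrate := mul_add_one_le_of_succ_le_sub_sq_div hc hu hsq t₁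
    have hct₁ : c ≤ t₁ * e := (div_le_iff₀ he).1 (Nat.le_ceil _)
    by_contra! hlt
    nlinarith [(Nat.cast_nonneg t₁ : (0 : ℝ) ≤ t₁)]
  have hexp : Real.exp (-(t₂ * (e / c))) ≤ ρ := by
    have ht₂ : c / e * Real.log (1 / ρ) ≤ t₂ := by
      push_cast at hT
      linarith
    have hlog_le : Real.log (1 / ρ) ≤ t₂ * (e / c) :=
      calc Real.log (1 / ρ) = c / e * Real.log (1 / ρ) * (e / c) := by field_simp
        _ ≤ t₂ * (e / c) := by gcongr
    rw [← Real.le_log_iff_exp_le hρ]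
    rw [one_div, Real.log_inv] at hlog_le
    linarith
  calc u (t₁ + t₂) ≤ Real.exp (-(t₂ * (e / c))) * u t₁ :=
        le_exp_mul_of_succ_le_one_sub_mul (u := fun k => u (t₁ + k)) (fun _ => hu _)
          (fun k => hlin (t₁ + k)) t₂
    _ ≤ ρ * e := by
        gcongr
        exact hu t₁

end RealInequalities

section FiniteExpectation

variable {Ω : Type*}

lemma sq_expect_le_expect_sq (s : Finset Ω) (f : Ω → ℝ) :
    (𝔼 i ∈ s, f i) ^ 2 ≤ 𝔼 i ∈ s, f i ^ 2 := by
  rcases s.eq_empty_or_nonempty with rfl | hs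
  · simp
  · simpa [expect_const hs] using expect_mul_sq_le_sq_mul_sq s f 1

lemma mul_card_filter_le_card_mul_expect (s : Finset Ω) {f : Ω → ℝ} (hf : ∀ i ∈ s, 0 ≤ f i)
    (e : ℝ) : e * #{i ∈ s | e ≤ f i} ≤ #s * 𝔼 i ∈ s, f i := by
  rw [card_mul_expect, mul_comm, ← nsmul_eq_mul]
  exact (card_nsmul_le_sum _ _ _ fun i hi => (mem_filter.1 hi).2).trans
    (sum_le_sum_of_subset_of_nonneg (filter_subset _ _) fun i hi _ => hf i hi)

lemma expect_piFinset_succ (P : Finset Ω) (t : ℕ) (G : (Fin (t + 1) → Ω) → ℝ) :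
    𝔼 s ∈ Fintype.piFinset fun _ : Fin (t + 1) => P, G s =
      𝔼 s ∈ Fintype.piFinset fun _ : Fin t => P, 𝔼 w ∈ P, G (Fin.snoc (α := fun _ => Ω) s w) := by
  rw [expect_comm, ← expect_product']
  refine expect_equiv (Fin.snocEquiv fun _ => Ω).symm (fun s => ?_) fun s _ => ?_
  · simp [Fin.forall_iff_castSucc, Fin.init]
  · simp [Fin.snocEquiv]

end FiniteExpectation

section RandomRun

variable {X Ω : Type*}

/-- Expectation of `G` at the state reached from `x₀` after `t` steps of the random process
`x ↦ step x w`, the samples `w` being independent and uniform on `P`. -/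
def runExpect (step : X → Ω → X) (P : Finset Ω) (x₀ : X) (t : ℕ) (G : X → ℝ) : ℝ :=
  𝔼 s ∈ Fintype.piFinset fun _ : Fin t => P, G (Fin.foldl t (fun x i => step x (s i)) x₀)

/-- The truncation `y · 𝟙[e ≤ y]`. The truncated gap satisfies both the sublinear and the
geometric recursion. -/
def truncBelow (e y : ℝ) : ℝ :=
  if e ≤ y then y else 0

lemma truncBelow_nonneg {e y : ℝ} (hy : 0 ≤ y) : 0 ≤ truncBelow e y := by
  unfold truncBelow
  split_ifs <;> simp [hy]

lemma truncBelow_le {e y : ℝ} (hy : 0 ≤ y) : truncBelow e y ≤ y := by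
  unfold truncBelow
  split_ifs <;> simp [hy]

lemma mul_truncBelow_le_sq {e y : ℝ} (hy : 0 ≤ y) : e * truncBelow e y ≤ truncBelow e y ^ 2 := by
  unfold truncBelow
  split_ifs with h
  · nlinarith
  · simp

lemma le_truncBelow_iff {e y : ℝ} (he : 0 < e) : e ≤ truncBelow e y ↔ e ≤ y := by
  unfold truncBelow
  split_ifs with h <;> simp [h, he]

variable {step : X → Ω → X} {P : Finset Ω} {x₀ : X}

lemma foldl_induction {S : X → Prop} (h₀ : S x₀) (hS : ∀ x, S x → ∀ w ∈ P, S (step x w))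
    {t : ℕ} {s : Fin t → Ω} (hs : ∀ i, s i ∈ P) :
    S (Fin.foldl t (fun x i => step x (s i)) x₀) := by
  induction t with
  | zero => simpa using h₀
  | succ t ih =>
    rw [Fin.foldl_succ_last]
    exact hS _ (ih fun i => hs i.castSucc) _ (hs _)

lemma runExpect_succ (t : ℕ) (G : X → ℝ) :
    runExpect step P x₀ (t + 1) G = runExpect step P x₀ t fun x => 𝔼 w ∈ P, G (step x w) := by
  simp only [runExpect, expect_piFinset_succ, Fin.foldl_succ_last, Fin.snoc_castSucc,
    Fin.snoc_last]

lemma runExpect_le_runExpect {S : X → Prop} (h₀ : S x₀)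
    (hS : ∀ x, S x → ∀ w ∈ P, S (step x w)) {G H : X → ℝ} (hGH : ∀ x, S x → G x ≤ H x) (t : ℕ) :
    runExpect step P x₀ t G ≤ runExpect step P x₀ t H :=
  expect_le_expect fun _ hs => hGH _ (foldl_induction h₀ hS (Fintype.mem_piFinset.1 hs))

lemma runExpect_sub_div (t : ℕ) (G H : X → ℝ) (c : ℝ) :
    runExpect step P x₀ t (fun x => G x - H x / c) =
      runExpect step P x₀ t G - runExpect step P x₀ t H / c := by
  simp only [runExpect, expect_sub_distrib, expect_div]

variable {D : X → ℝ} {c e ρ : ℝ}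

lemma expect_truncBelow_le {x : X} (hD : ∀ x, 0 ≤ D x) (hmono : ∀ w ∈ P, D (step x w) ≤ D x)
    (hdesc : 𝔼 w ∈ P, D (step x w) ≤ D x - D x ^ 2 / c) :
    𝔼 w ∈ P, truncBelow e (D (step x w)) ≤
      truncBelow e (D x) - truncBelow e (D x) ^ 2 / c := by
  by_cases hx : e ≤ D x
  · have htrunc : truncBelow e (D x) = D x := if_pos hx
    rw [htrunc]
    exact (expect_le_expect fun w _ => truncBelow_le (hD _)).trans hdesc
  · have htrunc : ∀ y ≤ D x, truncBelow e y = 0 := fun y hy => if_neg fun h => hx (h.trans hy)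
    rw [htrunc _ le_rfl, expect_eq_zero fun w hw => htrunc _ (hmono w hw)]
    simp

lemma runExpect_truncBelow_le (hc : 0 < c) (he : 0 < e) (hD : ∀ x, 0 ≤ D x)
    (hmono : ∀ x, ∀ w ∈ P, D (step x w) ≤ D x)
    (hdesc : ∀ x, D x ≤ D x₀ → 𝔼 w ∈ P, D (step x w) ≤ D x - D x ^ 2 / c)
    (hρ : 0 < ρ) (hρ1 : ρ ≤ 1) {T : ℕ} (hT : c / e * (1 + Real.log (1 / ρ)) + 1 ≤ T) :
    runExpect step P x₀ T (fun x => truncBelow e (D x)) ≤ ρ * e := by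
  have hrec (t : ℕ) : runExpect step P x₀ (t + 1) (fun x => truncBelow e (D x)) ≤
      runExpect step P x₀ t (fun x => truncBelow e (D x)) -
        runExpect step P x₀ t (fun x => truncBelow e (D x) ^ 2) / c := by
    rw [runExpect_succ, ← runExpect_sub_div]
    exact runExpect_le_runExpect (S := fun x => D x ≤ D x₀) le_rfl
      (fun x hx w hw => (hmono x w hw).trans hx)
      (fun x hx => expect_truncBelow_le hD (hmono x) (hdesc x hx)) t
  refine le_mul_of_succ_le_sub_sq_div_of_succ_le_one_sub_mul
    (u := fun t => runExpect step P x₀ t fun x => truncBelow e (D x)) hc he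
    (fun t => expect_nonneg fun s _ => truncBelow_nonneg (hD _)) (fun t => ?_) (fun t => ?_)
    hρ hρ1 hT
  · refine (hrec t).trans ?_
    gcongr
    exact sq_expect_le_expect_sq _ _
  · have hsq : e * runExpect step P x₀ t (fun x => truncBelow e (D x)) ≤
        runExpect step P x₀ t fun x => truncBelow e (D x) ^ 2 := by
      rw [runExpect, mul_expect]
      exact expect_le_expect fun s _ => mul_truncBelow_le_sq (hD _)
    calc runExpect step P x₀ (t + 1) (fun x => truncBelow e (D x)) ≤ _ := hrec t
      _ ≤ runExpect step P x₀ t (fun x => truncBelow e (D x)) -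
          e * runExpect step P x₀ t (fun x => truncBelow e (D x)) / c := by gcongr
      _ = (1 - e / c) * runExpect step P x₀ t (fun x => truncBelow e (D x)) := by ring

theorem one_sub_mul_card_le_card_filter_run (hc : 0 < c) (he : 0 < e) (hD : ∀ x, 0 ≤ D x)
    (hmono : ∀ x, ∀ w ∈ P, D (step x w) ≤ D x)
    (hdesc : ∀ x, D x ≤ D x₀ → 𝔼 w ∈ P, D (step x w) ≤ D x - D x ^ 2 / c)
    (hρ : 0 < ρ) (hρ1 : ρ ≤ 1) {T : ℕ} (hT : c / e * (1 + Real.log (1 / ρ)) + 1 ≤ T) :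
    (1 - ρ) * #(Fintype.piFinset fun _ : Fin T => P) ≤
      #{s ∈ Fintype.piFinset fun _ : Fin T => P |
        D (Fin.foldl T (fun x i => step x (s i)) x₀) ≤ e} := by
  set R := Fintype.piFinset fun _ : Fin T => P
  set d : (Fin T → Ω) → ℝ := fun s => D (Fin.foldl T (fun x i => step x (s i)) x₀)
  have hmarkov : e * #{s ∈ R | e ≤ d s} ≤ #R * (ρ * e) := by
    have h := mul_card_filter_le_card_mul_expect R (f := fun s => truncBelow e (d s))
      (fun s _ => truncBelow_nonneg (hD _)) e
    simp only [le_truncBelow_iff he] at h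
    exact h.trans (mul_le_mul_of_nonneg_left
      (runExpect_truncBelow_le hc he hD hmono hdesc hρ hρ1 hT) (Nat.cast_nonneg _))
  have hbad : (#{s ∈ R | ¬ d s ≤ e} : ℝ) ≤ ρ * #R := by
    have hsub : #{s ∈ R | ¬ d s ≤ e} ≤ #{s ∈ R | e ≤ d s} :=
      card_le_card (monotone_filter_right R fun s _ hs => (not_le.1 hs).le)
    have hle : (#{s ∈ R | e ≤ d s} : ℝ) ≤ ρ * #R := by
      refine le_of_mul_le_mul_left ?_ he
      linarith
    exact (Nat.cast_le.2 hsub).trans hle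
  have hsplit : (#{s ∈ R | d s ≤ e} : ℝ) + #{s ∈ R | ¬ d s ≤ e} = #R :=
    mod_cast card_filter_add_card_filter_not (s := R) fun s => d s ≤ e
  linarith

end RandomRun
section ExponentialLoss

variable {ι : Type} [Fintype ι] {n : ℕ} (m : ℕ) (A : Matrix ι (Fin n) ℝ)

lemma fExp_nonneg (x : ι → ℝ) : 0 ≤ fExp m x := by
  unfold fExp
  positivity

lemma iInf_fExp_mulVec_le (lam : Fin n → ℝ) : ⨅ μ, fExp m (A.mulVec μ) ≤ fExp m (A.mulVec lam) :=
  ciInf_le ⟨0, Set.forall_mem_range.2 fun _ => fExp_nonneg m _⟩ lam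

lemma hasFDerivAt_fExp (x : ι → ℝ) :
    HasFDerivAt (fExp m) ((1 / (m : ℝ)) • ∑ j, Real.exp (x j) •
      ContinuousLinearMap.proj (R := ℝ) (φ := fun _ : ι => ℝ) j) x :=
  (HasFDerivAt.fun_sum fun j _ => (hasFDerivAt_apply j x).exp).const_mul _

lemma gradf_apply (x : ι → ℝ) (j : ι) : gradf m x j = (1 / (m : ℝ)) * Real.exp (x j) := by
  simp [gradf, (hasFDerivAt_fExp m x).fderiv, Pi.single_apply]

variable {m A} in
lemma transpose_mulVec_gradf {lam : Fin n → ℝ} (h : fExp m (A.mulVec lam) ≠ 0) :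
    A.transpose.mulVec (gradf m (A.mulVec lam)) = fExp m (A.mulVec lam) • gradF m A lam := by
  have hlin : HasFDerivAt (fun μ => A.mulVec μ) (LinearMap.toContinuousLinearMap A.mulVecLin) lam :=
    (LinearMap.toContinuousLinearMap A.mulVecLin).hasFDerivAt
  have hF : HasFDerivAt (FObj m A) _ lam :=
    ((hasFDerivAt_fExp m (A.mulVec lam)).comp lam hlin).log h
  have hgradF (i : Fin n) : fExp m (A.mulVec lam) * gradF m A lam i =
      (1 / (m : ℝ)) * ∑ j, Real.exp (A.mulVec lam j) * A j i := by
    simp [gradF, hF.fderiv, mul_inv_cancel_left₀ h]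
  funext i
  rw [Pi.smul_apply, smul_eq_mul, hgradF, mul_sum, Matrix.mulVec_transpose]
  refine sum_congr rfl fun j _ => ?_
  rw [gradf_apply, mul_assoc]

lemma fExp_inr_le {κ : Type} [Fintype κ] (x : ι ⊕ κ → ℝ) :
    fExp m (fun j => x (Sum.inr j)) ≤ fExp m x := by
  unfold fExp
  rw [Fintype.sum_sum_type]
  gcongr
  exact le_add_of_nonneg_left (sum_nonneg fun _ _ => (Real.exp_pos _).le)

lemma gradf_fromRows_mulVec_mem {κ : Type} [Fintype κ] {A₀ : Matrix ι (Fin n) ℝ}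
    {Ap : Matrix κ (Fin n) ℝ} {B : ℝ} {C : Set (κ → ℝ)}
    (hC : {x | (∃ μ, x = Ap.mulVec μ) ∧ fExp m x ≤ B} ⊆ C) {lam : Fin n → ℝ}
    (h : fExp m ((Matrix.fromRows A₀ Ap).mulVec lam) ≤ B) :
    gradf m ((Matrix.fromRows A₀ Ap).mulVec lam) ∈
      {φ : ι ⊕ κ → ℝ | (∀ j, 0 ≤ φ (Sum.inl j)) ∧
        (fun j => φ (Sum.inr j)) ∈ (fun z => gradf m z) '' C} := by
  rw [Matrix.fromRows_mulVec] at h ⊢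
  refine ⟨fun j => ?_, Ap.mulVec lam, hC ⟨⟨lam, rfl⟩, (fExp_inr_le m _).trans h⟩, ?_⟩
  · rw [gradf_apply]
    positivity
  · funext j
    simp only [gradf_apply, Sum.elim_inr]

end ExponentialLoss

section Geometry

variable {ι : Type} [Fintype ι] {n : ℕ} (A : Matrix ι (Fin n) ℝ)

variable {A} in
lemma Lip_pos {i : Fin n} (h : ∃ j, A j i ≠ 0) : 0 < Lip A i :=
  let ⟨j, hj⟩ := h
  (by positivity : 0 < A j i ^ 2).trans_le
    (le_ciSup (f := fun j => A j i ^ 2) (Set.finite_range _).bddAbove j)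

lemma Lip_nonneg (i : Fin n) : 0 ≤ Lip A i :=
  Real.iSup_nonneg fun _ => sq_nonneg _

lemma normLinv_nonneg (g : Fin n → ℝ) : 0 ≤ normLinv A g :=
  Real.sqrt_nonneg _

lemma normLinv_sq (g : Fin n → ℝ) : normLinv A g ^ 2 = ∑ i, g i ^ 2 / Lip A i :=
  Real.sq_sqrt (sum_nonneg fun i _ => div_nonneg (sq_nonneg _) (Lip_nonneg A i))

lemma normLinv_smul {r : ℝ} (hr : 0 ≤ r) (g : Fin n → ℝ) :
    normLinv A (r • g) = r * normLinv A g := by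
  simp only [normLinv, Pi.smul_apply, smul_eq_mul, mul_pow, mul_div_assoc, ← mul_sum]
  rw [Real.sqrt_mul (sq_nonneg r), Real.sqrt_sq hr]

lemma D1_nonneg (K : Set (ι → ℝ)) (x : ι → ℝ) : 0 ≤ D1 K x :=
  Real.iInf_nonneg fun _ => sum_nonneg fun _ _ => abs_nonneg _

lemma D1_eq_zero_of_mem {K : Set (ι → ℝ)} {x : ι → ℝ} (hx : x ∈ K) : D1 K x = 0 := by
  refine le_antisymm ?_ (D1_nonneg K x)
  have hbdd : BddBelow (Set.range fun z : K => ∑ j, |x j - (z : ι → ℝ) j|) :=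
    ⟨0, Set.forall_mem_range.2 fun _ => sum_nonneg fun _ _ => abs_nonneg _⟩
  simpa [D1] using ciInf_le hbdd ⟨x, hx⟩

lemma gammaT_mul_D1_le {K : Set (ι → ℝ)} {φ : ι → ℝ} (hφ : φ ∈ K) :
    gammaT A K * D1 (K ∩ kerAT A) φ ≤ normLinv A (A.transpose.mulVec φ) := by
  have hnorm := normLinv_nonneg A (A.transpose.mulVec φ)
  rcases (D1_nonneg (K ∩ kerAT A) φ).eq_or_lt with hD | hD
  · rwa [← hD, mul_zero]
  · have hker : φ ∉ kerAT A := fun h => hD.ne' (D1_eq_zero_of_mem ⟨hφ, h⟩)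
    rw [← le_div_iff₀ hD]
    exact ciInf_le (ι := {φ // φ ∈ K ∧ φ ∉ kerAT A})
      (f := fun φ => normLinv A (A.transpose.mulVec φ) / D1 (K ∩ kerAT A) φ)
      ⟨0, Set.forall_mem_range.2 fun _ => div_nonneg (normLinv_nonneg A _) (D1_nonneg _ _)⟩
      ⟨φ, hφ, hker⟩

end Geometry

section ParallelAdaboost

variable {ι : Type} [Fintype ι] {n : ℕ} {m : ℕ} {A : Matrix ι (Fin n) ℝ}

lemma FObj_sub_log_le_mul_normLinv_gradF {K : Set (ι → ℝ)} {lam : Fin n → ℝ} {B κ y : ℝ}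
    (hpos : 0 < fExp m (A.mulVec lam)) (hB : fExp m (A.mulVec lam) ≤ B)
    (hmem : gradf m (A.mulVec lam) ∈ K) (hγ : 0 < gammaT A K) (hκ : 0 ≤ κ)
    (hbound : FObj m A lam - y ≤ κ * D1 (K ∩ kerAT A) (gradf m (A.mulVec lam))) :
    FObj m A lam - y ≤ κ * B / gammaT A K * normLinv A (gradF m A lam) := by
  have hD : D1 (K ∩ kerAT A) (gradf m (A.mulVec lam)) ≤
      B * normLinv A (gradF m A lam) / gammaT A K := by
    rw [le_div_iff₀' hγ]
    calc gammaT A K * D1 (K ∩ kerAT A) (gradf m (A.mulVec lam))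
        ≤ normLinv A (A.transpose.mulVec (gradf m (A.mulVec lam))) := gammaT_mul_D1_le A hmem
      _ = fExp m (A.mulVec lam) * normLinv A (gradF m A lam) := by
        rw [transpose_mulVec_gradf hpos.ne', normLinv_smul A hpos.le]
      _ ≤ B * normLinv A (gradF m A lam) := by
        gcongr
        exact normLinv_nonneg A _
  calc FObj m A lam - y ≤ κ * D1 (K ∩ kerAT A) (gradf m (A.mulVec lam)) := hbound
    _ ≤ κ * (B * normLinv A (gradF m A lam) / gammaT A K) := by gcongr
    _ = κ * B / gammaT A K * normLinv A (gradF m A lam) := by ring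

variable (m A) in
/-- The full step `h_i = -∇_iF(λ) / (β L_i)`, which minimises the separable upper bound of the
expected separable overapproximation. -/
def adaDirection (β : ℝ) (lam : Fin n → ℝ) : Fin n → ℝ :=
  fun i => -(1 / (β * Lip A i) * gradF m A lam i)

variable (m A) in
/-- One iteration of Parallel Adaboost from `lam` with sampled coordinates `S`. -/
def adaStep (β : ℝ) (lam : Fin n → ℝ) (S : Finset (Fin n)) : Fin n → ℝ :=
  if FObj m A (lam + restr (adaDirection m A β lam) S) ≤ FObj m A lam
  then lam + restr (adaDirection m A β lam) S else lam

lemma iter_eq_foldl_adaStep (β : ℝ) (lam0 : Fin n → ℝ) (s : ℕ → Finset (Fin n)) (t : ℕ) :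
    iter m A β lam0 s t = Fin.foldl t (fun lam i => adaStep m A β lam (s i)) lam0 := by
  have hstep (lam : Fin n → ℝ) (S : Finset (Fin n)) :
      (fun i => if i ∈ S then lam i - 1 / (β * Lip A i) * gradF m A lam i else lam i) =
        lam + restr (adaDirection m A β lam) S := by
    funext i
    simp only [restr, adaDirection, Pi.add_apply]
    split_ifs <;> ring
  induction t with
  | zero => simp [iter]
  | succ t ih =>
    rw [Fin.foldl_succ_last]
    simp only [iter, hstep, ih, adaStep, Fin.val_castSucc, Fin.val_last]

lemma FObj_adaStep (β : ℝ) (lam : Fin n → ℝ) (S : Finset (Fin n)) :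
    FObj m A (adaStep m A β lam S) =
      min (FObj m A (lam + restr (adaDirection m A β lam) S)) (FObj m A lam) := by
  rw [adaStep, apply_ite (FObj m A), min_def]

lemma eso_adaDirection {β : ℝ} (hβ : 0 < β) (hL : ∀ i, 0 < Lip A i) (lam : Fin n → ℝ) :
    ∑ i, gradF m A lam i * adaDirection m A β lam i +
      β / 2 * ∑ i, Lip A i * adaDirection m A β lam i ^ 2 =
      -(normLinv A (gradF m A lam) ^ 2 / (2 * β)) := by
  rw [normLinv_sq, sum_div, mul_sum, ← sum_add_distrib, ← sum_neg_distrib]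
  refine sum_congr rfl fun i _ => ?_
  have hLi := hL i
  unfold adaDirection
  field_simp
  ring

variable {τ : ℕ} {β : ℝ}

lemma expect_FObj_adaStep_le (hβ : 0 < β) (hL : ∀ i, 0 < Lip A i) (hESO : ESO m A τ β)
    (lam : Fin n → ℝ) :
    𝔼 S ∈ powersetCard τ univ, FObj m A (adaStep m A β lam S) ≤
      FObj m A lam - τ / n * (normLinv A (gradF m A lam) ^ 2 / (2 * β)) :=
  calc 𝔼 S ∈ powersetCard τ univ, FObj m A (adaStep m A β lam S)
      ≤ 𝔼 S ∈ powersetCard τ univ, FObj m A (lam + restr (adaDirection m A β lam) S) :=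
        expect_le_expect fun S _ => (FObj_adaStep β lam S).trans_le (min_le_left _ _)
    _ = niceExp n τ fun S => FObj m A (lam + restr (adaDirection m A β lam) S) :=
        expect_eq_sum_div_card _ _
    _ ≤ FObj m A lam - τ / n * (normLinv A (gradF m A lam) ^ 2 / (2 * β)) := by
        refine (hESO _ _).trans_eq ?_
        rw [eso_adaDirection hβ hL, mul_neg, sub_eq_add_neg]

lemma expect_gap_adaStep_le (hβ : 0 < β) (hL : ∀ i, 0 < Lip A i) (hESO : ESO m A τ β)
    (hτn : τ ≤ n) {lam : Fin n → ℝ} {y M : ℝ} (hM : 0 < M)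
    (hgap : 0 ≤ FObj m A lam - y)
    (hdom : FObj m A lam - y ≤ M * normLinv A (gradF m A lam)) :
    𝔼 S ∈ powersetCard τ univ, (FObj m A (adaStep m A β lam S) - y) ≤
      FObj m A lam - y - (FObj m A lam - y) ^ 2 / (2 * β * n * M ^ 2 / τ) := by
  have hne : (powersetCard τ (univ : Finset (Fin n))).Nonempty :=
    powersetCard_nonempty.2 (by simpa using hτn)
  have hsq : (FObj m A lam - y) ^ 2 / (2 * β * n * M ^ 2 / τ) ≤
      τ / n * (normLinv A (gradF m A lam) ^ 2 / (2 * β)) :=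
    calc (FObj m A lam - y) ^ 2 / (2 * β * n * M ^ 2 / τ)
        ≤ (M * normLinv A (gradF m A lam)) ^ 2 / (2 * β * n * M ^ 2 / τ) := by gcongr
      _ = τ / n * (normLinv A (gradF m A lam) ^ 2 / (2 * β)) := by field_simp
  rw [expect_sub_distrib, expect_const hne]
  linarith [expect_FObj_adaStep_le hβ hL hESO lam]

lemma filter_card_eq_piFinset_powersetCard (T n τ : ℕ) :
    ({s | ∀ t, (s t).card = τ} : Finset (Fin T → Finset (Fin n))) =
      Fintype.piFinset fun _ => powersetCard τ univ := by
  ext s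
  simp [mem_powersetCard]

end ParallelAdaboost

theorem stmt11_general {ι : Type} [Fintype ι] {m n : ℕ} (A : Matrix ι (Fin n) ℝ)
    (hA : ∀ i : Fin n, ∃ j, A j i ≠ 0) {τ : ℕ} (hτ1 : 1 ≤ τ) (hτn : τ ≤ n)
    (lam0 : Fin n → ℝ) (K : Set (ι → ℝ))
    (hK : ∀ lam : Fin n → ℝ, fExp m (A.mulVec lam) ≤ fExp m (A.mulVec lam0) →
      gradf m (A.mulVec lam) ∈ K)
    {fbar : ℝ} (hfbar : fbar = ⨅ lam : Fin n → ℝ, fExp m (A.mulVec lam)) (hfbarpos : 0 < fbar)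
    (hγ : 0 < gammaT A K) {κ : ℝ} (hκ : 0 < κ)
    (hbound : ∀ lam : Fin n → ℝ, fExp m (A.mulVec lam) ≤ fExp m (A.mulVec lam0) →
      FObj m A lam - Real.log fbar ≤ κ / fbar * D1 (K ∩ kerAT A) (gradf m (A.mulVec lam)))
    {β : ℝ} (hβ : 0 < β) (hESO : ESO m A τ β) {ε : ℝ} (hε0 : 0 < ε) (hε2 : ε ≤ 2 * fbar)
    {ρ : ℝ} (hρ0 : 0 < ρ) (hρ1 : ρ ≤ 1) {T : ℕ}
    (hT : (T : ℝ) ≥ (4 * β * (n : ℝ) / (τ : ℝ)) * (κ ^ 2 / gammaT A K ^ 2) *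
        (fExp m (A.mulVec lam0) ^ 2 / fbar) * (1 / ε) * (1 + Real.log (1 / ρ)) + 1) :
    ((Finset.univ.filter (fun s : Fin T → Finset (Fin n) =>
        (∀ t, (s t).card = τ) ∧
        fExp m (A.mulVec (iter m A β lam0
          (fun t => if h : t < T then s ⟨t, h⟩ else ∅) T)) - fbar ≤ ε)).card : ℝ) ≥
      (1 - ρ) * ((Finset.univ.filter (fun s : Fin T → Finset (Fin n) =>
        ∀ t, (s t).card = τ)).card : ℝ) := by
  have hle (lam) : fbar ≤ fExp m (A.mulVec lam) := hfbar.trans_le (iInf_fExp_mulVec_le m A lam)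
  have hpos (lam) : 0 < fExp m (A.mulVec lam) := hfbarpos.trans_le (hle lam)
  have hL (i) : 0 < Lip A i := Lip_pos (hA i)
  have hn0 : (0 : ℝ) < n := by exact_mod_cast hτ1.trans hτn
  set M : ℝ := κ / fbar * fExp m (A.mulVec lam0) / gammaT A K with hM
  have hM0 : 0 < M := by have := hpos lam0; positivity
  have hgap (lam) : 0 ≤ FObj m A lam - Real.log fbar :=
    sub_nonneg.2 (Real.log_le_log hfbarpos (hle lam))
  have hdesc (lam) (h : FObj m A lam - Real.log fbar ≤ FObj m A lam0 - Real.log fbar) :=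
    have hB : fExp m (A.mulVec lam) ≤ fExp m (A.mulVec lam0) :=
      (Real.log_le_log_iff (hpos _) (hpos _)).1 ((sub_le_sub_iff_right _).1 h)
    expect_gap_adaStep_le hβ hL hESO hτn hM0 (hgap lam) (FObj_sub_log_le_mul_normLinv_gradF
      (hpos lam) hB (hK lam hB) hγ (by positivity) (hbound lam hB))
  have hcount := one_sub_mul_card_le_card_filter_run (T := T) (e := ε / (2 * fbar))
    (by positivity) (by positivity) hgap
    (fun lam S _ => sub_le_sub_right ((FObj_adaStep β lam S).trans_le (min_le_right _ _)) _)
    hdesc hρ0 hρ1 (hT.le.trans' (le_of_eq (by rw [hM]; field_simp; ring)))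
  rw [← filter_filter, filter_card_eq_piFinset_powersetCard]
  refine hcount.trans (Nat.cast_le.2 (card_le_card (monotone_filter_right _ fun s _ hs => ?_)))
  simp only [iter_eq_foldl_adaStep, Fin.is_lt, dif_pos, Fin.eta]
  exact sub_le_of_log_sub_log_le (hpos _) hfbarpos hε0.le hε2 hs

/-- main iteration-complexity theorem in the general case
`1 ≤ |H(A)| ≤ m − 1`.  The rows of `A` are split as `A = [A₀; A₊]` where the
rows of `A₊` (indexed by `Sum.inr`) form the hard core.  Probabilities over the
i.i.d. `τ`-nice samplings `(S_0,…,S_{T−1})` are expressed by counting the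
sequences of `τ`-subsets. -/
theorem stmt11 {m₀ mp n : ℕ} (hn : 1 ≤ n) (hm₀ : 1 ≤ m₀) (hmp : 1 ≤ mp)
    (m : ℕ) (hmeq : m = m₀ + mp)
    (A₀ : Matrix (Fin m₀) (Fin n) ℝ) (Ap : Matrix (Fin mp) (Fin n) ℝ)
    (A : Matrix (Fin m₀ ⊕ Fin mp) (Fin n) ℝ) (hA : A = Matrix.fromRows A₀ Ap)
    (hAcol : ∀ i : Fin n, ∃ j, A j i ≠ 0)
    (hH : hardCore A = Set.range Sum.inr)
    (τ : ℕ) (hτ1 : 1 ≤ τ) (hτn : τ ≤ n)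
    (lam0 : Fin n → ℝ)
    (Cplus : Set (Fin mp → ℝ)) (a b : Fin mp → ℝ) (hrect : Cplus = Set.Icc a b)
    (hCcont : {x : Fin mp → ℝ | (∃ μ : Fin n → ℝ, x = Ap.mulVec μ) ∧
        fExp m x ≤ fExp m (A.mulVec lam0)} ⊆ Cplus)
    (K : Set (Fin m₀ ⊕ Fin mp → ℝ))
    (hK : K = {φ | (∀ j₀ : Fin m₀, 0 ≤ φ (Sum.inl j₀)) ∧
        (fun jp : Fin mp => φ (Sum.inr jp)) ∈ (fun z : Fin mp → ℝ => gradf m z) '' Cplus})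
    (fbar : ℝ) (hfbar : fbar = ⨅ lam : Fin n → ℝ, fExp m (A.mulVec lam))
    (hfbarpos : 0 < fbar)
    (hfbarplus : (⨅ μ : Fin n → ℝ, fExp m (Ap.mulVec μ)) = fbar)
    (γ : ℝ) (hγ : γ = gammaT A K) (hγpos : 0 < γ)
    (ct wt : ℝ) (hct : 0 < ct) (hwt : 0 ≤ wt)
    (hbound : ∀ lam : Fin n → ℝ, fExp m (A.mulVec lam) ≤ fExp m (A.mulVec lam0) →
      FObj m A lam - Real.log fbar ≤
        (1 + 2 * wt / ct) / fExp m (Ap.mulVec lam) *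
          D1 (K ∩ kerAT A) (gradf m (A.mulVec lam)))
    (β : ℝ) (hβ : 0 < β) (hESO : ESO m A τ β)
    (ε : ℝ) (hε0 : 0 < ε) (hε2 : ε < 2 * fbar)
    (ρ : ℝ) (hρ0 : 0 < ρ) (hρ1 : ρ < 1)
    (T : ℕ)
    (hT : (T : ℝ) ≥ (4 * β * (n : ℝ) / (τ : ℝ)) * ((1 + 2 * wt / ct) ^ 2 / γ ^ 2) *
        (fExp m (A.mulVec lam0) ^ 2 / fbar) * (1 / ε) * (1 + Real.log (1 / ρ)) + 2) :
    ((Finset.univ.filter (fun s : Fin T → Finset (Fin n) =>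
        (∀ t, (s t).card = τ) ∧
        fExp m (A.mulVec (iter m A β lam0
          (fun t => if h : t < T then s ⟨t, h⟩ else ∅) T)) - fbar ≤ ε)).card : ℝ) ≥
      (1 - ρ) * ((Finset.univ.filter (fun s : Fin T → Finset (Fin n) =>
        ∀ t, (s t).card = τ)).card : ℝ) := by
  subst hA hK hγ
  have hbound' : ∀ lam, fExp m ((Matrix.fromRows A₀ Ap).mulVec lam) ≤ _ → _ := fun lam h =>
    (hbound lam h).trans (mul_le_mul_of_nonneg_right (div_le_div_of_nonneg_left (by positivity)
      hfbarpos (hfbarplus.symm.trans_le (iInf_fExp_mulVec_le m Ap lam))) (D1_nonneg _ _))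
  exact stmt11_general _ hAcol hτ1 hτn lam0 _ (fun _ => gradf_fromRows_mulVec_mem m hCcont) hfbar
    hfbarpos hγpos (by positivity) hbound' hβ hESO hε0 hε2.le hρ0 hρ1.le (by linarith)

end
end
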